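/- Deodhar's defect formula: for any word \underline{w} = s₁s₂⋯s_m in the generators S, the product \underline{H}_{s₁}⋯\underline{H}_{s_m} in the Hecke algebra equals the sum over all 01-sequences e of length m of v^{d(e)}·H_{\underline{w}^e}, where \underline{w}^e = s₁^{e₁}⋯s_m^{e_m} is the element expressed by the subsequence e and d(e) is the defect of e. -/

import Mathlib

open LaurentPolynomial

/-- The Bruhat stroll associated to a word `s₁⋯s_m` and a 01-sequence `e`:
`x_i = s₁^{e₁}⋯s_i^{e_i}`. -/
def stroll {B W : Type*} [Group W] {M : CoxeterMatrix B} (cs : CoxeterSystem M W)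
    {m : ℕ} (s : Fin m → B) (e : Fin m → Bool) (i : ℕ) : W :=
  ((List.ofFn (fun j : Fin m => if e j then cs.simple (s j) else 1)).take i).prod

/-- The defect of a 01-sequence `e`: the number of indices `i` with `e_i = 0` labelled `U`
(i.e. `x_{i-1}s_i > x_{i-1}`) minus the number of indices with `e_i = 0` labelled `D`. -/
noncomputable def defect {B W : Type*} [Group W] {M : CoxeterMatrix B} (cs : CoxeterSystem M W)
    {m : ℕ} (s : Fin m → B) (e : Fin m → Bool) : ℤ :=
  ∑ i : Fin m, if e i then 0 else
    (if cs.length (stroll cs s e i.val * cs.simple (s i)) > cs.length (stroll cs s e i.val)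
      then 1 else -1)

/-- Up to time `m`, a stroll along a word of length `m + 1` only sees the first `m` letters. -/
theorem stroll_of_le {B W : Type*} [Group W] {M : CoxeterMatrix B} (cs : CoxeterSystem M W)
    {m : ℕ} (s : Fin (m + 1) → B) (e : Fin (m + 1) → Bool) {i : ℕ} (hi : i ≤ m) :
    stroll cs s e i = stroll cs (Fin.init s) (Fin.init e) i := by
  unfold stroll
  rw [List.ofFn_succ', List.concat_eq_append, List.take_append_of_le_length (by simpa using hi)]
  rfl

theorem stroll_succ_last {B W : Type*} [Group W] {M : CoxeterMatrix B} (cs : CoxeterSystem M W)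
    {m : ℕ} (s : Fin (m + 1) → B) (e : Fin (m + 1) → Bool) :
    stroll cs s e (m + 1) = stroll cs (Fin.init s) (Fin.init e) m *
      if e (Fin.last m) then cs.simple (s (Fin.last m)) else 1 := by
  unfold stroll
  rw [List.take_of_length_le (by simp), List.take_of_length_le (by simp), List.ofFn_succ',
    List.concat_eq_append, List.prod_append, List.prod_singleton]
  rfl

theorem defect_succ {B W : Type*} [Group W] {M : CoxeterMatrix B} (cs : CoxeterSystem M W)
    {m : ℕ} (s : Fin (m + 1) → B) (e : Fin (m + 1) → Bool) :
    defect cs s e = defect cs (Fin.init s) (Fin.init e) +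
      if e (Fin.last m) then 0 else
        if cs.length (stroll cs (Fin.init s) (Fin.init e) m * cs.simple (s (Fin.last m))) >
          cs.length (stroll cs (Fin.init s) (Fin.init e) m) then 1 else -1 := by
  unfold defect
  rw [Fin.sum_univ_castSucc, Fin.val_last, stroll_of_le cs s e le_rfl]
  congr 1
  refine Finset.sum_congr rfl fun i _ => ?_
  rw [Fin.val_castSucc, stroll_of_le cs s e i.isLt.le]
  rfl

/-- Right multiplication of a standard basis element `H_x` by `H_s + v`. -/
theorem standard_mul_kazhdanLusztig_simple {B W : Type*} [Group W] {M : CoxeterMatrix B}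
    (cs : CoxeterSystem M W) {A : Type*} [Ring A] [Algebra (LaurentPolynomial ℤ) A] {H : W → A}
    (hmul_gt : ∀ (w : W) (i : B), cs.length (w * cs.simple i) > cs.length w →
      H w * H (cs.simple i) = H (w * cs.simple i))
    (hmul_lt : ∀ (w : W) (i : B), cs.length (w * cs.simple i) < cs.length w →
      H w * H (cs.simple i) = H (w * cs.simple i) +
        algebraMap (LaurentPolynomial ℤ) A (T (-1) - T 1) * H w)
    (x : W) (i : B) :
    H x * (H (cs.simple i) + algebraMap (LaurentPolynomial ℤ) A (T 1)) =
      H (x * cs.simple i) + algebraMap (LaurentPolynomial ℤ) A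
        (T (if cs.length (x * cs.simple i) > cs.length x then 1 else -1)) * H x := by
  rw [mul_add, ← Algebra.commutes]
  split_ifs with h
  · rw [hmul_gt x i h]
  · rw [hmul_lt x i (lt_of_le_of_ne (not_lt.mp h) (cs.length_mul_simple_ne x i)), map_sub, sub_mul]
    abel

/-- Deodhar's defect formula: for any word `s₁⋯s_m` in the generators,
`H̲_{s₁}⋯H̲_{s_m} = Σ_e v^{d(e)}·H_{w^e}`, the sum over all 01-sequences `e` of length `m`,
where `w^e` is the element expressed by the subsequence `e` and `d(e)` is its defect. -/
theorem deodhar_defect_formula {B W : Type*} [Group W] {M : CoxeterMatrix B}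
    (cs : CoxeterSystem M W)
    (A : Type*) [Ring A] [Algebra (LaurentPolynomial ℤ) A]
    (H : W → A) (h1 : H 1 = 1)
    (hmul_gt : ∀ (w : W) (i : B), cs.length (w * cs.simple i) > cs.length w →
      H w * H (cs.simple i) = H (w * cs.simple i))
    (hmul_lt : ∀ (w : W) (i : B), cs.length (w * cs.simple i) < cs.length w →
      H w * H (cs.simple i) = H (w * cs.simple i) +
        algebraMap (LaurentPolynomial ℤ) A (T (-1) - T 1) * H w)
    (m : ℕ) (s : Fin m → B) :
    (List.ofFn (fun i : Fin m =>
        H (cs.simple (s i)) + algebraMap (LaurentPolynomial ℤ) A (T 1))).prod =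
      ∑ e : Fin m → Bool,
        algebraMap (LaurentPolynomial ℤ) A (T (defect cs s e)) * H (stroll cs s e m) := by
  induction m with
  | zero => simp [stroll, defect, h1]
  | succ m ih =>
    rw [List.ofFn_succ', List.concat_eq_append, List.prod_append, List.prod_singleton,
      ih (fun i => s i.castSucc), Finset.sum_mul,
      ← (Fin.snocEquiv fun _ : Fin (m + 1) => Bool).sum_comp, Fintype.sum_prod_type_right]
    refine Finset.sum_congr rfl fun e _ => ?_
    rw [mul_assoc, standard_mul_kazhdanLusztig_simple cs hmul_gt hmul_lt, mul_add, ← mul_assoc,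
      ← map_mul, ← T_add]
    simp [Fin.snocEquiv, stroll_succ_last, defect_succ, Fin.init_def]
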